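/- Let A, B ⊆ [m] with A ⊄ B and B ⊄ A, let Δ = Δ_A ∪ Δ_B, D = Δ + wΔ = {d_1 + w·d_2 : d_1, d_2 ∈ Δ} ⊆ F_4^m, N = 2^{|A|} + 2^{|B|} − 2^{|A∩B|}, s = |A\B|, t = |B\A|. Then |D^*| = N² − 1, C_{D^*} has exactly 4^{|A∪B|} distinct codewords (dimension |A∪B| over F_4), and the multiset {wt(c_{D^*}(x)) : x ∈ F_4^m} is obtained by combining the following weight–multiplicity pairs, each multiplicity further multiplied by 4^{m−|A∪B|} (coinciding weight values accumulate): weight 0, multiplicity 1; weight 2^{|A|}(3·2^{|A|−2} + 2^{|B|} − 2^{|A∩B|}), multiplicity 3(2^s−1); weight 2^{|B|}(2^{|A|} + 3·2^{|B|−2} − 2^{|A∩B|}), multiplicity 3(2^t−1); weight (2^{|A|}+2^{|B|})(3·2^{|A|−2} + 3·2^{|B|−2} − 2^{|A∩B|}), multiplicity 3(2^s−1)(2^t−1); weight (3/4)·2^{|A|}(2^{|A|} + 2^{|B|+1} − 2^{|A∩B|+1}), multiplicity (2^s−1)(2^s−2); weight (3/4)·2^{|B|}(2^{|A|+1} + 2^{|B|}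 − 2^{|A∩B|+1}), multiplicity (2^t−1)(2^t−2); weight (3/4)N² − (1/4)(2^{|A|}−2^{|A∩B|})(2^{|B|}−2^{|A∩B|}) + (1/4)·2^{|A∩B|}(2^{|A|}+2^{|B|}−2^{|A∩B|+1}), multiplicity 6(2^s−1)(2^t−1); weight (3/4)N² + (1/4)·2^{|A∩B|}(2^{|A|+1} − 3·2^{|A∩B|}), multiplicity 3(2^s−1)(2^t−1)(2^t−2); weight (3/4)N² + (1/4)·2^{|A∩B|}(2^{|B|+1} − 3·2^{|A∩B|}), multiplicity 3(2^s−1)(2^t−1)(2^s−2); weight (3/4)(2^{|A|}+2^{|B|})(2^{|A|}+2^{|B|}−2^{|A∩B|+1}), multiplicity (2^s−1)(2^t−1)(2^s−2)(2^t−2); weight (3/4)N², multiplicity 4^{|A∪B|} − 4^{s+t}. -/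

import Mathlib

open Finset

/-- The support of a binary vector, as a finset of coordinates. -/
def supp {m : ℕ} (v : Fin m → ZMod 2) : Finset (Fin m) :=
  Finset.univ.filter (fun i => v i ≠ 0)

/-- The simplicial complex generated by `A`: all binary vectors with support contained in `A`. -/
def delta {m : ℕ} (A : Finset (Fin m)) : Finset (Fin m → ZMod 2) :=
  Finset.univ.filter (fun v => supp v ⊆ A)

variable {F : Type} [Field F] [Fintype F] [DecidableEq F]

/-- The embedding of `F_2 = {0,1}` into a field `F`. -/
def e2 (a : ZMod 2) : F := (a.val : F)

/-- The inner product `x·d = Σ x_i d_i` of two vectors over `F`. -/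
def dotF {m : ℕ} (x d : Fin m → F) : F := ∑ i, x i * d i

/-- The quaternary vector `d_1 + w·d_2` attached to a pair of binary vectors. -/
def dvec {m : ℕ} (w : F) (p : (Fin m → ZMod 2) × (Fin m → ZMod 2)) : Fin m → F :=
  fun i => e2 (p.1 i) + w * e2 (p.2 i)

/-- The Hamming weight of the codeword `c_D(x) = (x·d)_{d∈D}`. -/
def wtF {m : ℕ} (D : Finset (Fin m → F)) (x : Fin m → F) : ℕ :=
  (D.filter (fun d => dotF x d ≠ 0)).card

/-- The codeword `c_D(x) = (x·d)_{d∈D}` of the code with defining set `D`. -/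
def codeword {m : ℕ} (D : Finset (Fin m → F)) (x : Fin m → F) : {d // d ∈ D} → F :=
  fun d => dotF x d.1

set_option linter.all false

/-- Pair coordinates. -/
abbrev BV (m : ℕ) := Fin m → ZMod 2

def dot2 {m : ℕ} (x d : Fin m → ZMod 2) : ZMod 2 := ∑ i, x i * d i

def chi (a : ZMod 2) : ℚ := if a = 0 then 1 else -1

lemma chi_add (a b : ZMod 2) : chi (a + b) = chi a * chi b := by
  have : ∀ a b : ZMod 2, (a + b = 0 ↔ (a = 0 ↔ b = 0)) := by decide
  unfold chi
  simp only [this]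
  by_cases ha : a = 0 <;> by_cases hb : b = 0 <;> simp [ha, hb]

lemma chi_zero : chi 0 = 1 := by simp [chi]

lemma chi_sum {ι : Type*} (s : Finset ι) (f : ι → ZMod 2) :
    chi (∑ i ∈ s, f i) = ∏ i ∈ s, chi (f i) := by
  classical
  induction s using Finset.induction_on with
  | empty => simp [chi_zero]
  | insert a s ha ih => rw [Finset.sum_insert ha, Finset.prod_insert ha, chi_add, ih]

lemma two_zero (hF : Fintype.card F = 4) : (2 : F) = 0 := by
  have h : ((Fintype.card F : ℕ) : F) = 0 := Nat.cast_card_eq_zero F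
  rw [hF] at h
  have : (2 : F) * 2 = 0 := by
    rw [← h]; norm_num
  simpa using this

lemma e2_zero : (e2 0 : F) = 0 := by simp [e2]
lemma e2_one : (e2 1 : F) = 1 := by simp [e2, ZMod.val_one]

lemma zmod2_cases (a : ZMod 2) : a = 0 ∨ a = 1 := by
  revert a; decide

lemma e2_add (h2 : (2 : F) = 0) (a b : ZMod 2) : (e2 (a + b) : F) = e2 a + e2 b := by
  rcases zmod2_cases a with rfl | rfl <;> rcases zmod2_cases b with rfl | rfl <;>
    simp [e2_zero, e2_one]
  have : (1 + 1 : ZMod 2) = 0 := by decide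
  rw [this, e2_zero, one_add_one_eq_two, h2]

lemma e2_mul (a b : ZMod 2) : (e2 (a * b) : F) = e2 a * e2 b := by
  rcases zmod2_cases a with rfl | rfl <;> rcases zmod2_cases b with rfl | rfl <;>
    simp [e2_zero, e2_one]

lemma e2_sum (h2 : (2 : F) = 0) {ι : Type*} (s : Finset ι) (f : ι → ZMod 2) :
    (e2 (∑ i ∈ s, f i) : F) = ∑ i ∈ s, e2 (f i) := by
  classical
  induction s using Finset.induction_on with
  | empty => simp [e2_zero]
  | insert a s ha ih => rw [Finset.sum_insert ha, Finset.sum_insert ha, e2_add h2, ih]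

lemma comb_zero (h2 : (2 : F) = 0) (w : F) (hw : w ^ 2 + w + 1 = 0) (a b : ZMod 2) :
    (e2 a + w * e2 b = 0) ↔ (a = 0 ∧ b = 0) := by
  have hw0 : w ≠ 0 := by rintro rfl; simp at hw
  have hw1 : 1 + w ≠ 0 := by
    intro h
    have : w ^ 2 + w + 1 = w ^ 2 + (1 + w) := by ring
    rw [this, h] at hw
    simp at hw
    exact hw0 hw
  rcases zmod2_cases a with rfl | rfl <;> rcases zmod2_cases b with rfl | rfl <;>
    simp [e2_zero, e2_one, hw0, hw1]

/-- The map from binary pairs to the field. -/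
def comb (w : F) (p : ZMod 2 × ZMod 2) : F := e2 p.1 + w * e2 p.2

lemma comb_bij (hF : Fintype.card F = 4) (w : F) (hw : w ^ 2 + w + 1 = 0) :
    Function.Bijective (comb w) := by
  have h2 := two_zero hF
  rw [Fintype.bijective_iff_injective_and_card]
  refine ⟨?_, ?_⟩
  · rintro ⟨a, b⟩ ⟨a', b'⟩ h
    have h0 : e2 (a + a') + w * e2 (b + b') = 0 := by
      rw [e2_add h2, e2_add h2]
      simp only [comb] at h
      linear_combination h + (e2 a' + w * e2 b') * h2
    rw [comb_zero h2 w hw] at h0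
    have key : ∀ x y : ZMod 2, x + y = 0 → x = y := by decide
    rw [key _ _ h0.1, key _ _ h0.2]
  · rw [hF, Fintype.card_prod, ZMod.card]

lemma dvec_bij {m : ℕ} (hF : Fintype.card F = 4) (w : F) (hw : w ^ 2 + w + 1 = 0) :
    Function.Bijective (dvec (m := m) w) := by
  have hb := comb_bij hF w hw
  constructor
  · rintro ⟨a, b⟩ ⟨a', b'⟩ h
    have : ∀ i, (a i, b i) = (a' i, b' i) := fun i => hb.1 (congrFun h i)
    simp only [Prod.mk.injEq] at this ⊢
    exact ⟨funext fun i => (this i).1, funext fun i => (this i).2⟩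
  · intro x
    choose g hg using fun i => hb.2 (x i)
    exact ⟨(fun i => (g i).1, fun i => (g i).2), funext hg⟩

lemma dot_dvec {m : ℕ} (h2 : (2 : F) = 0) (w : F) (hw : w ^ 2 + w + 1 = 0)
    (α β d1 d2 : Fin m → ZMod 2) :
    dotF (dvec w (α, β)) (dvec w (d1, d2)) =
      e2 (dot2 α d1 + dot2 β d2) + w * e2 (dot2 β d1 + dot2 (α + β) d2) := by
  simp only [dotF, dot2, e2_add h2, e2_sum h2, e2_mul, dvec, Pi.add_apply, Finset.mul_sum, mul_add, ← Finset.sum_add_distrib]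
  refine Finset.sum_congr rfl fun i _ => ?_
  linear_combination (e2 (β i) * e2 (d2 i)) * hw - (1 + w) * (e2 (β i) * e2 (d2 i)) * h2

lemma mem_delta {m : ℕ} (A : Finset (Fin m)) (v : Fin m → ZMod 2) :
    v ∈ delta A ↔ ∀ i, i ∉ A → v i = 0 := by
  simp only [delta, supp, Finset.mem_filter, Finset.mem_univ, true_and, Finset.subset_iff]
  exact forall_congr' fun i => by tauto

lemma delta_eq {m : ℕ} (A : Finset (Fin m)) :
    delta A = Fintype.piFinset (fun i => if i ∈ A then (Finset.univ : Finset (ZMod 2)) else {0}) := by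
  ext v
  rw [mem_delta, Fintype.mem_piFinset]
  refine forall_congr' fun i => ?_
  by_cases h : i ∈ A <;> simp [h]

lemma delta_inter {m : ℕ} (A B : Finset (Fin m)) : delta A ∩ delta B = delta (A ∩ B) := by
  ext v
  simp only [Finset.mem_inter, mem_delta]
  constructor
  · rintro ⟨h1, h2⟩ i hi
    by_cases h : i ∈ A
    · exact h2 i fun h' => hi ⟨h, h'⟩
    · exact h1 i h
  · intro h
    exact ⟨fun i hi => h i fun h' => hi h'.1, fun i hi => h i fun h' => hi h'.2⟩

lemma sum_delta {m : ℕ} (A : Finset (Fin m)) (v : Fin m → ZMod 2) :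
    ∑ d ∈ delta A, chi (dot2 v d) = if (∀ i ∈ A, v i = 0) then (2 : ℚ) ^ A.card else 0 := by
  simp only [dot2, chi_sum]
  rw [delta_eq, ← Finset.prod_univ_sum (fun i => if i ∈ A then (Finset.univ : Finset (ZMod 2)) else {0}) (fun i d => chi (v i * d))]
  have h1 : ∀ i, ∑ d ∈ (if i ∈ A then (Finset.univ : Finset (ZMod 2)) else {0}), chi (v i * d)
      = if i ∈ A then (1 + chi (v i)) else 1 := by
    intro i
    by_cases h : i ∈ A
    · simp only [h, if_true]
      have : (Finset.univ : Finset (ZMod 2)) = {0, 1} := by decide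
      rw [this, Finset.sum_pair (by decide)]
      simp [chi_zero]
    · simp [h, chi_zero]
  simp only [h1]
  rw [Finset.prod_ite_mem, Finset.univ_inter]
  split_ifs with h
  · rw [Finset.prod_congr rfl (g := fun _ => (2 : ℚ))]
    · simp
    · intro i hi; rw [h i hi, chi_zero]; norm_num
  · push Not at h
    obtain ⟨i, hi, hv⟩ := h
    exact Finset.prod_eq_zero hi (by simp [chi, hv])

/-- The character sum over the complex. -/
def SS {m : ℕ} (A B : Finset (Fin m)) (v : Fin m → ZMod 2) : ℚ :=
  ∑ d ∈ delta A ∪ delta B, chi (dot2 v d)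

lemma SS_eq {m : ℕ} (A B : Finset (Fin m)) (v : Fin m → ZMod 2) :
    SS A B v = (if (∀ i ∈ A, v i = 0) then (2 : ℚ) ^ A.card else 0)
      + (if (∀ i ∈ B, v i = 0) then (2 : ℚ) ^ B.card else 0)
      - (if (∀ i ∈ A ∩ B, v i = 0) then (2 : ℚ) ^ (A ∩ B).card else 0) := by
  rw [← sum_delta, ← sum_delta, ← sum_delta, ← delta_inter, ← Finset.sum_union_inter, SS]
  ring

lemma card_delta {m : ℕ} (A : Finset (Fin m)) : (delta A).card = 2 ^ A.card := by
  have h := sum_delta A 0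
  simp [dot2, chi_zero] at h
  exact_mod_cast h

lemma card_complex {m : ℕ} (A B : Finset (Fin m)) :
    (delta A ∪ delta B).card = 2 ^ A.card + 2 ^ B.card - 2 ^ (A ∩ B).card := by
  rw [Finset.card_union, delta_inter, card_delta, card_delta, card_delta]

lemma dot2_add {m : ℕ} (a b d : Fin m → ZMod 2) : dot2 (a + b) d = dot2 a d + dot2 b d := by
  simp [dot2, add_mul, Finset.sum_add_distrib]

lemma ind_eq (p q : ZMod 2) : (if p = 0 ∧ q = 0 then (1 : ℚ) else 0)
    = 1 / 4 * (1 + chi p + chi q + chi (p + q)) := by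
  rw [chi_add]
  by_cases hp : p = 0 <;> by_cases hq : q = 0 <;> simp [chi, hp, hq]
  norm_num

lemma weight_eq {m : ℕ} (hF : Fintype.card F = 4) (w : F) (hw : w ^ 2 + w + 1 = 0)
    (A B : Finset (Fin m)) (α β : Fin m → ZMod 2) :
    (wtF ((((delta A ∪ delta B) ×ˢ (delta A ∪ delta B)).image (dvec w)).erase 0)
      (dvec w (α, β)) : ℚ)
    = 3 / 4 * (SS A B 0) ^ 2 - 1 / 4 * (SS A B α * SS A B β + SS A B β * SS A B (α + β)
        + SS A B (α + β) * SS A B α) := by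
  have h2 := two_zero hF
  set E := delta A ∪ delta B with hE
  have hcard : SS A B 0 = E.card := by
    simp [SS, dot2, chi_zero, hE]
  have e1 : wtF (((E ×ˢ E).image (dvec w)).erase 0) (dvec w (α, β))
      = ((E ×ˢ E).filter (fun p => dotF (dvec w (α, β)) (dvec w p) ≠ 0)).card := by
    unfold wtF
    rw [← Finset.card_image_of_injective ((E ×ˢ E).filter _) (dvec_bij hF w hw).1]
    congr 1
    ext d
    simp only [Finset.mem_filter, Finset.mem_erase, Finset.mem_image]
    constructor
    · rintro ⟨⟨_, p, hp, rfl⟩, h⟩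
      exact ⟨p, ⟨hp, h⟩, rfl⟩
    · rintro ⟨p, ⟨hp, h⟩, rfl⟩
      refine ⟨⟨?_, p, hp, rfl⟩, h⟩
      intro h0
      apply h
      rw [h0]
      simp [dotF]
  have e2' : (((E ×ˢ E).filter (fun p => dotF (dvec w (α, β)) (dvec w p) ≠ 0)).card : ℚ)
      = (E.card : ℚ) ^ 2 - ((E ×ˢ E).filter (fun p => dotF (dvec w (α, β)) (dvec w p) = 0)).card := by
    have := Finset.card_filter_add_card_filter_not (s := E ×ˢ E) (fun p => dotF (dvec w (α, β)) (dvec w p) = 0)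
    rw [Finset.card_product] at this
    have h' : ((((E ×ˢ E).filter (fun p => dotF (dvec w (α, β)) (dvec w p) = 0)).card : ℕ) : ℚ)
      + ((E ×ˢ E).filter (fun p => dotF (dvec w (α, β)) (dvec w p) ≠ 0)).card = E.card * E.card := by
      exact_mod_cast this
    linear_combination h'
  have e3 : (((E ×ˢ E).filter (fun p => dotF (dvec w (α, β)) (dvec w p) = 0)).card : ℚ)
      = 1 / 4 * (SS A B 0 * SS A B 0 + SS A B α * SS A B β + SS A B β * SS A B (α + β)
        + SS A B (α + β) * SS A B α) := by
    rw [Finset.card_filter]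
    push_cast
    simp only [SS, ← hE]
    simp only [Finset.sum_mul_sum, ← Finset.sum_add_distrib]
    rw [Finset.sum_product, Finset.mul_sum]
    refine Finset.sum_congr rfl fun d1 _ => ?_
    rw [Finset.mul_sum]
    refine Finset.sum_congr rfl fun d2 _ => ?_
    simp only [dot_dvec h2 w hw, comb_zero h2 w hw]
    rw [ind_eq]
    have hz : ∀ d : Fin m → ZMod 2, dot2 0 d = 0 := by intro d; simp [dot2]
    have hs : dot2 α d1 + dot2 β d2 + (dot2 β d1 + dot2 (α + β) d2)
        = dot2 (α + β) d1 + dot2 α d2 := by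
      rw [dot2_add, dot2_add]
      have : ∀ x y z t : ZMod 2, x + y + (z + (t + y)) = x + z + t := by decide
      exact this _ _ _ _
    rw [hs, hz, hz, chi_zero, chi_add, chi_add, chi_add]
    ring
  rw [e1, e2', e3, hcard]
  ring

/-- Sum over pairs, grouped by vanishing pattern. -/
lemma pair_sum {ι : Type*} [Fintype ι] [DecidableEq ι] {M : Type*} [AddCommMonoid M]
    (h : Bool → Bool → Bool → M) (n : ℕ) (hn : n = 2 ^ Fintype.card ι) :
    ∑ y : ι → ZMod 2 × ZMod 2, h (decide (∀ i, (y i).1 = 0)) (decide (∀ i, (y i).2 = 0))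
        (decide (∀ i, (y i).1 + (y i).2 = 0))
    = h true true true + (n - 1) • h true false false + (n - 1) • h false true false
      + (n - 1) • h false false true + ((n - 1) * (n - 2)) • h false false false := by
  have hcard : Fintype.card (ι → ZMod 2) = n := by simp [hn, ZMod.card]
  have e : ∑ y : ι → ZMod 2 × ZMod 2, h (decide (∀ i, (y i).1 = 0)) (decide (∀ i, (y i).2 = 0))
        (decide (∀ i, (y i).1 + (y i).2 = 0))
      = ∑ p : (ι → ZMod 2) × (ι → ZMod 2), h (decide (p.1 = 0)) (decide (p.2 = 0)) (decide (p.2 = p.1)) := by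
    refine Fintype.sum_equiv (Equiv.arrowProdEquivProdArrow _ _ _) _ _ fun y => ?_
    have key : ∀ x y : ZMod 2, x + y = 0 ↔ y = x := by decide
    simp only [funext_iff, key]
    rfl
  rw [e, Fintype.sum_prod_type]
  rw [← Finset.add_sum_erase _ _ (Finset.mem_univ (0 : ι → ZMod 2))]
  have i1 : ∑ β : ι → ZMod 2, h (decide ((0 : ι → ZMod 2) = 0)) (decide (β = 0)) (decide (β = 0))
      = h true true true + (n - 1) • h true false false := by
    rw [← Finset.add_sum_erase _ _ (Finset.mem_univ (0 : ι → ZMod 2))]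
    rw [Finset.sum_congr rfl (g := fun _ => h true false false)]
    · simp [Finset.sum_const, Finset.card_erase_of_mem, hcard, hn, ZMod.card]
    · intro β hβ
      simp [(Finset.mem_erase.1 hβ).1]
  have i2 : ∀ α ∈ (Finset.univ : Finset (ι → ZMod 2)).erase 0,
      ∑ β : ι → ZMod 2, h (decide (α = 0)) (decide (β = 0)) (decide (β = α))
      = h false true false + h false false true + (n - 2) • h false false false := by
    intro α hα
    have hα0 := (Finset.mem_erase.1 hα).1
    rw [← Finset.add_sum_erase _ _ (Finset.mem_univ (0 : ι → ZMod 2)),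
      ← Finset.add_sum_erase _ _ hα]
    rw [Finset.sum_congr rfl (g := fun _ => h false false false)]
    · rw [Finset.sum_const, Finset.card_erase_of_mem hα, Finset.card_erase_of_mem (Finset.mem_univ _),
        Finset.card_univ, hcard, Nat.sub_sub]
      simp [hα0, hα0.symm, add_assoc]
    · intro β hβ
      have h1 := (Finset.mem_erase.1 hβ)
      have h2 := (Finset.mem_erase.1 h1.2)
      simp [hα0, h1.1, h2.1]
  have i1' := i1
  simp only at i1' ⊢
  rw [i1', Finset.sum_congr rfl i2, Finset.sum_const, Finset.card_erase_of_mem (Finset.mem_univ _),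
        Finset.card_univ, hcard]
  rw [mul_smul, smul_add, smul_add]
  abel

/-- The grouped sum over vanishing patterns. -/
def TT {M : Type*} [AddCommMonoid M] (n : ℕ) (h : Bool → Bool → Bool → M) : M :=
  h true true true + (n - 1) • h true false false + (n - 1) • h false true false
      + (n - 1) • h false false true + ((n - 1) * (n - 2)) • h false false false

lemma triple_sum {P Q I : Type} [Fintype P] [DecidableEq P] [Fintype Q] [DecidableEq Q]
    [Fintype I] [DecidableEq I] {M : Type*} [AddCommMonoid M]
    (h : Bool → Bool → Bool → Bool → Bool → Bool → Bool → Bool → Bool → M) :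
    ∑ y : P → ZMod 2 × ZMod 2, ∑ z : Q → ZMod 2 × ZMod 2, ∑ x : I → ZMod 2 × ZMod 2,
      h (decide (∀ i, (y i).1 = 0)) (decide (∀ i, (y i).2 = 0))
        (decide (∀ i, (y i).1 + (y i).2 = 0))
        (decide (∀ i, (z i).1 = 0)) (decide (∀ i, (z i).2 = 0))
        (decide (∀ i, (z i).1 + (z i).2 = 0))
        (decide (∀ i, (x i).1 = 0)) (decide (∀ i, (x i).2 = 0))
        (decide (∀ i, (x i).1 + (x i).2 = 0))
    = TT (2 ^ Fintype.card P) fun p1 p2 p3 => TT (2 ^ Fintype.card Q) fun q1 q2 q3 =>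
        TT (2 ^ Fintype.card I) fun i1 i2 i3 => h p1 p2 p3 q1 q2 q3 i1 i2 i3 :=
  (Finset.sum_congr rfl fun y _ =>
    (Finset.sum_congr rfl fun z _ =>
      pair_sum (h (decide (∀ i, (y i).1 = 0)) (decide (∀ i, (y i).2 = 0))
        (decide (∀ i, (y i).1 + (y i).2 = 0))
        (decide (∀ i, (z i).1 = 0)) (decide (∀ i, (z i).2 = 0))
        (decide (∀ i, (z i).1 + (z i).2 = 0))) _ rfl).trans
      (pair_sum (fun q1 q2 q3 => TT (2 ^ Fintype.card I) fun i1 i2 i3 =>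
        h (decide (∀ i, (y i).1 = 0)) (decide (∀ i, (y i).2 = 0))
        (decide (∀ i, (y i).1 + (y i).2 = 0)) q1 q2 q3 i1 i2 i3) _ rfl)).trans
    (pair_sum (fun p1 p2 p3 => TT (2 ^ Fintype.card Q) fun q1 q2 q3 =>
        TT (2 ^ Fintype.card I) fun i1 i2 i3 => h p1 p2 p3 q1 q2 q3 i1 i2 i3) _ rfl)

/-- Character sum by pattern. -/
def Sp (X Y Z : ℚ) (p q i : Bool) : ℚ :=
  (if p && i then X else 0) + (if q && i then Y else 0) - (if i then Z else 0)

/-- Weight by pattern. -/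
def Wt (X Y Z : ℚ) (p1 p2 p3 q1 q2 q3 i1 i2 i3 : Bool) : ℚ :=
  3 / 4 * (X + Y - Z) ^ 2 - 1 / 4 * (Sp X Y Z p1 q1 i1 * Sp X Y Z p2 q2 i2
    + Sp X Y Z p2 q2 i2 * Sp X Y Z p3 q3 i3 + Sp X Y Z p3 q3 i3 * Sp X Y Z p1 q1 i1)

lemma SS_pat {m : ℕ} (A B : Finset (Fin m)) (v : Fin m → ZMod 2) :
    SS A B v = Sp (2 ^ A.card) (2 ^ B.card) (2 ^ (A ∩ B).card)
      (decide (∀ i : ↥(A \ B), v i = 0)) (decide (∀ i : ↥(B \ A), v i = 0))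
      (decide (∀ i : ↥(A ∩ B), v i = 0)) := by
  rw [SS_eq, Sp]
  have h1 : (∀ i ∈ A, v i = 0) ↔
      ((∀ i : ↥(A \ B), v i = 0) ∧ (∀ i : ↥(A ∩ B), v i = 0)) := by
    constructor
    · intro h
      exact ⟨fun i => h i (Finset.mem_sdiff.1 i.2).1, fun i => h i (Finset.mem_inter.1 i.2).1⟩
    · rintro ⟨h, h'⟩ i hi
      by_cases hb : i ∈ B
      · exact h' ⟨i, Finset.mem_inter.2 ⟨hi, hb⟩⟩
      · exact h ⟨i, Finset.mem_sdiff.2 ⟨hi, hb⟩⟩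
  have h2 : (∀ i ∈ B, v i = 0) ↔
      ((∀ i : ↥(B \ A), v i = 0) ∧ (∀ i : ↥(A ∩ B), v i = 0)) := by
    constructor
    · intro h
      exact ⟨fun i => h i (Finset.mem_sdiff.1 i.2).1, fun i => h i (Finset.mem_inter.1 i.2).2⟩
    · rintro ⟨h, h'⟩ i hi
      by_cases hb : i ∈ A
      · exact h' ⟨i, Finset.mem_inter.2 ⟨hb, hi⟩⟩
      · exact h ⟨i, Finset.mem_sdiff.2 ⟨hi, hb⟩⟩
  have h3 : (∀ i ∈ A ∩ B, v i = 0) ↔ (∀ i : ↥(A ∩ B), v i = 0) :=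
    ⟨fun h i => h i i.2, fun h i hi => h ⟨i, hi⟩⟩
  simp only [h1, h2, h3, Bool.and_eq_true, decide_eq_true_eq]

lemma restr_bij {m : ℕ} {G : Type*} (A B : Finset (Fin m)) :
    Function.Bijective (fun y : Fin m → G =>
      ((fun i : ↥(A \ B) => y i), (fun i : ↥(B \ A) => y i), (fun i : ↥(A ∩ B) => y i),
        (fun i : ↥((A ∪ B)ᶜ) => y i))) := by
  constructor
  · intro y z h
    simp only [Prod.mk.injEq, funext_iff] at h
    obtain ⟨h1, h2, h3, h4⟩ := h
    funext i
    by_cases ha : i ∈ A <;> by_cases hb : i ∈ B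
    · exact h3 ⟨i, by simp [ha, hb]⟩
    · exact h1 ⟨i, by simp [ha, hb]⟩
    · exact h2 ⟨i, by simp [ha, hb]⟩
    · exact h4 ⟨i, by simp [ha, hb]⟩
  · rintro ⟨y1, y2, y3, y4⟩
    refine ⟨fun i => if ha : i ∈ A then
        (if hb : i ∈ B then y3 ⟨i, by simp [ha, hb]⟩ else y1 ⟨i, by simp [ha, hb]⟩)
      else (if hb : i ∈ B then y2 ⟨i, by simp [ha, hb]⟩ else y4 ⟨i, by simp [ha, hb]⟩), ?_⟩
    simp only [Prod.mk.injEq]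
    refine ⟨?_, ?_, ?_, ?_⟩ <;> funext ⟨i, hi⟩ <;> simp at hi <;> simp [hi]

lemma pairs_bij {m : ℕ} (hF : Fintype.card F = 4) (w : F) (hw : w ^ 2 + w + 1 = 0) :
    Function.Bijective (fun y : Fin m → ZMod 2 × ZMod 2 =>
      dvec w ((fun i => (y i).1), (fun i => (y i).2))) :=
  (dvec_bij hF w hw).comp (Equiv.arrowProdEquivProdArrow _ _ _).bijective

lemma weight_multiset {m : ℕ} (hF : Fintype.card F = 4) (w : F) (hw : w ^ 2 + w + 1 = 0)
    (A B : Finset (Fin m)) :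
    (Finset.univ.val.map
        (fun x : Fin m → F =>
          (wtF ((((delta A ∪ delta B) ×ˢ (delta A ∪ delta B)).image (dvec w)).erase 0) x : ℚ)))
    = TT (2 ^ (A \ B).card) fun p1 p2 p3 => TT (2 ^ (B \ A).card) fun q1 q2 q3 =>
        TT (2 ^ (A ∩ B).card) fun i1 i2 i3 => (4 ^ (m - (A ∪ B).card)) •
          ({Wt (2 ^ A.card) (2 ^ B.card) (2 ^ (A ∩ B).card)
            p1 p2 p3 q1 q2 q3 i1 i2 i3} : Multiset ℚ) := by
  have e0 : ∀ f : (Fin m → F) → ℚ, (Finset.univ.val.map f) = ∑ x, ({f x} : Multiset ℚ) := by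
    intro f
    have := Multiset.map_map (fun a => ({a} : Multiset ℚ)) f Finset.univ.val
    rw [← Multiset.sum_map_singleton (Multiset.map f _), this]
    rfl
  rw [e0]
  have ht := triple_sum (P := ↥(A \ B)) (Q := ↥(B \ A)) (I := ↥(A ∩ B))
    (fun p1 p2 p3 q1 q2 q3 i1 i2 i3 => (4 ^ (m - (A ∪ B).card)) •
          ({Wt (2 ^ A.card) (2 ^ B.card) (2 ^ (A ∩ B).card)
            p1 p2 p3 q1 q2 q3 i1 i2 i3} : Multiset ℚ))
  simp only [Fintype.card_coe] at ht
  rw [← ht]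
  rw [← Fintype.sum_bijective _ (pairs_bij hF w hw) _ _ fun y => rfl]
  rw [Fintype.sum_bijective _ (restr_bij A B) _
    (fun z : (↥(A \ B) → ZMod 2 × ZMod 2) × (↥(B \ A) → ZMod 2 × ZMod 2) ×
        (↥(A ∩ B) → ZMod 2 × ZMod 2) × (↥((A ∪ B)ᶜ) → ZMod 2 × ZMod 2) =>
      ({Wt (2 ^ A.card) (2 ^ B.card) (2 ^ (A ∩ B).card)
        (decide (∀ i, (z.1 i).1 = 0)) (decide (∀ i, (z.1 i).2 = 0))
        (decide (∀ i, (z.1 i).1 + (z.1 i).2 = 0))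
        (decide (∀ i, (z.2.1 i).1 = 0)) (decide (∀ i, (z.2.1 i).2 = 0))
        (decide (∀ i, (z.2.1 i).1 + (z.2.1 i).2 = 0))
        (decide (∀ i, (z.2.2.1 i).1 = 0)) (decide (∀ i, (z.2.2.1 i).2 = 0))
        (decide (∀ i, (z.2.2.1 i).1 + (z.2.2.1 i).2 = 0))} : Multiset ℚ))]
  · simp only [Fintype.sum_prod_type]
    have hc : Fintype.card (↥((A ∪ B)ᶜ) → ZMod 2 × ZMod 2) = 4 ^ (m - (A ∪ B).card) := by
      rw [Fintype.card_fun, Fintype.card_coe, Finset.card_compl, Fintype.card_fin,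
        Fintype.card_prod, ZMod.card]
    refine Finset.sum_congr rfl fun y _ => Finset.sum_congr rfl fun z _ =>
      Finset.sum_congr rfl fun x _ => ?_
    rw [← hc, ← Finset.card_univ, ← Finset.sum_const]
  · intro y
    rw [weight_eq hF w hw, Wt]
    have h0 : SS A B 0 = 2 ^ A.card + 2 ^ B.card - 2 ^ (A ∩ B).card := by
      rw [SS_eq]; simp
    rw [h0, SS_pat, SS_pat, SS_pat]
    rfl

lemma card_codewords {m : ℕ} (hF : Fintype.card F = 4) (w : F) (hw : w ^ 2 + w + 1 = 0)
    (A B : Finset (Fin m)) :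
    (Finset.univ.image
        (fun x : Fin m → F => codeword
          ((((delta A ∪ delta B) ×ˢ (delta A ∪ delta B)).image (dvec w)).erase 0) x)).card
      = 4 ^ (A ∪ B).card := by
  set D := (((delta A ∪ delta B) ×ˢ (delta A ∪ delta B)).image (dvec w)).erase 0 with hD
  let ex : (↥(A ∪ B) → F) → (Fin m → F) := fun y i => if h : i ∈ A ∪ B then y ⟨i, h⟩ else 0
  have hdel : ∀ d ∈ delta A ∪ delta B, ∀ i, i ∉ A ∪ B → d i = 0 := by
    intro d hd i hi
    rw [Finset.mem_union, not_or] at hi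
    rcases Finset.mem_union.1 hd with h | h
    · exact (mem_delta A d).1 h i hi.1
    · exact (mem_delta B d).1 h i hi.2
  have hsupp : ∀ d ∈ D, ∀ i, i ∉ A ∪ B → d i = 0 := by
    intro d hd i hi
    rw [hD, Finset.mem_erase, Finset.mem_image] at hd
    obtain ⟨_, ⟨d1, d2⟩, hp, rfl⟩ := hd
    rw [Finset.mem_product] at hp
    simp [dvec, hdel d1 hp.1 i hi, hdel d2 hp.2 i hi, e2_zero]
  have h1 : ∀ x, codeword D x = codeword D (ex fun i => x i) := by
    intro x
    funext d
    simp only [codeword, dotF]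
    refine Finset.sum_congr rfl fun i _ => ?_
    by_cases hi : i ∈ A ∪ B
    · simp only [ex, dif_pos hi]
    · rw [hsupp d.1 d.2 i hi]; simp
  have h2 : Finset.univ.image (fun x : Fin m → F => codeword D x)
      = Finset.univ.image (fun y => codeword D (ex y)) := by
    ext c
    simp only [Finset.mem_image, Finset.mem_univ, true_and]
    constructor
    · rintro ⟨x, rfl⟩; exact ⟨fun i => x i, (h1 x).symm⟩
    · rintro ⟨y, rfl⟩; exact ⟨_, rfl⟩
  rw [h2, Finset.card_image_of_injective, Finset.card_univ, Fintype.card_fun, hF, Fintype.card_coe]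
  intro y z hyz
  funext ⟨i, hi⟩
  have hv : dvec w ((Pi.single i 1 : Fin m → ZMod 2), 0) = (Pi.single i 1 : Fin m → F) := by
    funext j
    by_cases hj : j = i
    · subst hj; simp [dvec, e2_zero, e2_one]
    · simp [dvec, e2_zero, hj]
  have hmem : (Pi.single i 1 : Fin m → F) ∈ D := by
    rw [hD, Finset.mem_erase]
    refine ⟨fun h => ?_, ?_⟩
    · have := congrFun h i; simp at this
    · rw [← hv]
      refine Finset.mem_image_of_mem _ (Finset.mem_product.2 ⟨?_, ?_⟩)
      · simp only [Finset.mem_union, mem_delta] at hi ⊢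
        refine hi.imp ?_ ?_ <;>
        · intro h j hj
          have : j ≠ i := by rintro rfl; exact hj h
          simp [this]
      · simp [mem_delta]
  have := congrFun hyz ⟨_, hmem⟩
  simpa [codeword, dotF, ex, Pi.single_apply, Finset.mem_union.1 hi] using this

/-- Proposition 4.7: weight distribution of the quaternary code `C_{D^*}` for
`D = Δ + wΔ`, where `Δ = Δ_A ∪ Δ_B` is the simplicial complex with maximal elements
`A ⊄ B` and `B ⊄ A`. -/
theorem quaternary_code_two_maximal_elements {m : ℕ} (hm : 1 ≤ m)
    (hF : Fintype.card F = 4) (w : F) (hw : w ^ 2 + w + 1 = 0)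
    (A B : Finset (Fin m)) (hA : ¬ A ⊆ B) (hB : ¬ B ⊆ A)
    (a b c s t u : ℕ) (ha : a = A.card) (hb : b = B.card) (hc : c = (A ∩ B).card)
    (hs : s = (A \ B).card) (ht : t = (B \ A).card) (hu : u = (A ∪ B).card)
    (N : ℚ) (hN : N = 2 ^ a + 2 ^ b - 2 ^ c) :
    ((((delta A ∪ delta B) ×ˢ (delta A ∪ delta B)).image (dvec w)).erase 0).card
      = (2 ^ a + 2 ^ b - 2 ^ c) ^ 2 - 1
    ∧ (Finset.univ.image
        (fun x : Fin m → F => codeword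
          ((((delta A ∪ delta B) ×ˢ (delta A ∪ delta B)).image (dvec w)).erase 0) x)).card
      = 4 ^ u
    ∧ (Finset.univ.val.map
        (fun x : Fin m → F =>
          (wtF ((((delta A ∪ delta B) ×ˢ (delta A ∪ delta B)).image (dvec w)).erase 0) x : ℚ)))
      = Multiset.replicate (4 ^ (m - u)) 0
        + Multiset.replicate (3 * (2 ^ s - 1) * 4 ^ (m - u))
            (2 ^ a * (3 * 2 ^ a / 4 + 2 ^ b - 2 ^ c))
        + Multiset.replicate (3 * (2 ^ t - 1) * 4 ^ (m - u))
            (2 ^ b * (2 ^ a + 3 * 2 ^ b / 4 - 2 ^ c))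
        + Multiset.replicate (3 * (2 ^ s - 1) * (2 ^ t - 1) * 4 ^ (m - u))
            ((2 ^ a + 2 ^ b) * (3 * 2 ^ a / 4 + 3 * 2 ^ b / 4 - 2 ^ c))
        + Multiset.replicate ((2 ^ s - 1) * (2 ^ s - 2) * 4 ^ (m - u))
            (3 / 4 * 2 ^ a * (2 ^ a + 2 ^ (b + 1) - 2 ^ (c + 1)))
        + Multiset.replicate ((2 ^ t - 1) * (2 ^ t - 2) * 4 ^ (m - u))
            (3 / 4 * 2 ^ b * (2 ^ (a + 1) + 2 ^ b - 2 ^ (c + 1)))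
        + Multiset.replicate (6 * (2 ^ s - 1) * (2 ^ t - 1) * 4 ^ (m - u))
            (3 / 4 * N ^ 2 - 1 / 4 * (2 ^ a - 2 ^ c) * (2 ^ b - 2 ^ c)
              + 1 / 4 * 2 ^ c * (2 ^ a + 2 ^ b - 2 ^ (c + 1)))
        + Multiset.replicate (3 * (2 ^ s - 1) * (2 ^ t - 1) * (2 ^ t - 2) * 4 ^ (m - u))
            (3 / 4 * N ^ 2 + 1 / 4 * 2 ^ c * (2 ^ (a + 1) - 3 * 2 ^ c))
        + Multiset.replicate (3 * (2 ^ s - 1) * (2 ^ t - 1) * (2 ^ s - 2) * 4 ^ (m - u))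
            (3 / 4 * N ^ 2 + 1 / 4 * 2 ^ c * (2 ^ (b + 1) - 3 * 2 ^ c))
        + Multiset.replicate ((2 ^ s - 1) * (2 ^ t - 1) * (2 ^ s - 2) * (2 ^ t - 2) * 4 ^ (m - u))
            (3 / 4 * (2 ^ a + 2 ^ b) * (2 ^ a + 2 ^ b - 2 ^ (c + 1)))
        + Multiset.replicate ((4 ^ u - 4 ^ (s + t)) * 4 ^ (m - u)) (3 / 4 * N ^ 2) := by
  subst ha hb hc hs ht hu hN
  refine ⟨?_, card_codewords hF w hw A B, ?_⟩
  · rw [Finset.card_erase_of_mem, Finset.card_image_of_injective _ (dvec_bij hF w hw).1,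
      Finset.card_product, card_complex, sq]
    refine Finset.mem_image.2 ⟨(0, 0), ?_, ?_⟩
    · simp [mem_delta]
    · funext i; simp [dvec, e2_zero]
  · rw [weight_multiset hF w hw]
    have hsp : 1 ≤ (A \ B).card := Finset.card_pos.2 (Finset.sdiff_nonempty.2 hA)
    have htp : 1 ≤ (B \ A).card := Finset.card_pos.2 (Finset.sdiff_nonempty.2 hB)
    have hu : (A ∪ B).card = (A \ B).card + (B \ A).card + (A ∩ B).card := by
      have e1 := Finset.card_union_add_card_inter A B
      have e2 := Finset.card_sdiff_add_card_inter A B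
      have e3 := Finset.card_sdiff_add_card_inter B A
      rw [Finset.inter_comm B A] at e3
      omega
    have hpow : ∀ k, 1 ≤ k → ∃ S : ℕ, 2 ^ k = S + 2 := by
      intro k hk
      have : 2 ^ 1 ≤ 2 ^ k := Nat.pow_le_pow_right (by norm_num) hk
      exact ⟨2 ^ k - 2, by omega⟩
    generalize 4 ^ (m - (A ∪ B).card) = K
    rw [hu]
    generalize A.card = a
    generalize B.card = b
    generalize (A ∩ B).card = c at *
    generalize (A \ B).card = s at *
    generalize (B \ A).card = t at *
    obtain ⟨S, hS⟩ := hpow s hsp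
    obtain ⟨T, hT⟩ := hpow t htp
    obtain ⟨C, hC⟩ : ∃ C : ℕ, 2 ^ c = C + 1 := ⟨2 ^ c - 1, by have := Nat.one_le_two_pow (n := c); omega⟩
    have hlast : 4 ^ (s + t + c) - 4 ^ (s + t) = (S + 2) ^ 2 * (T + 2) ^ 2 * (3 * C + C * (C - 1)) := by
      have h4 : ∀ k, 4 ^ k = (2 ^ k) ^ 2 := by intro k; rw [← pow_mul, mul_comm, pow_mul]; norm_num
      rw [pow_add 4 (s + t), pow_add 4 s t, h4, h4, h4, hS, hT, hC]
      apply Nat.sub_eq_of_eq_add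
      cases C with
      | zero => simp
      | succ C => simp only [Nat.add_sub_cancel]; ring
    rw [hlast, hS, hT, hC]
    have s1 : S + 2 - 1 = S + 1 := by omega
    have s2 : S + 2 - 2 = S := by omega
    have t1 : T + 2 - 1 = T + 1 := by omega
    have t2 : T + 2 - 2 = T := by omega
    have c1 : C + 1 - 1 = C := by omega
    have c2 : C + 1 - 2 = C - 1 := by omega
    simp only [s1, s2, t1, t2]
    generalize hX : (2 : ℚ) ^ a = X
    generalize hY : (2 : ℚ) ^ b = Y
    generalize hZ : (2 : ℚ) ^ c = Z
    simp only [pow_succ (2 : ℚ), hX, hY, hZ]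
    have hI : ∀ p1 p2 p3 q1 q2 q3, TT (C + 1) (fun i1 i2 i3 => K • ({Wt X Y Z p1 p2 p3 q1 q2 q3 i1 i2 i3} : Multiset ℚ))
        = K • {Wt X Y Z p1 p2 p3 q1 q2 q3 true true true}
          + (K * (3 * C + C * (C - 1))) • {3 / 4 * (X + Y - Z) ^ 2} := by
      intro p1 p2 p3 q1 q2 q3
      have h : ∀ i1 i2 i3, (i1, i2, i3) ∈ [(true, false, false), (false, true, false), (false, false, true), (false, false, false)] →
          Wt X Y Z p1 p2 p3 q1 q2 q3 i1 i2 i3 = 3 / 4 * (X + Y - Z) ^ 2 := by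
        intro i1 i2 i3 hi
        simp at hi
        rcases hi with ⟨rfl, rfl, rfl⟩ | ⟨rfl, rfl, rfl⟩ | ⟨rfl, rfl, rfl⟩ | ⟨rfl, rfl, rfl⟩ <;> simp [Wt, Sp]
      simp only [TT, c1, c2]
      rw [h true false false (by simp), h false true false (by simp), h false false true (by simp), h false false false (by simp)]
      module
    simp only [hI]
    generalize 3 * C + C * (C - 1) = E
    simp only [TT, s1, s2, t1, t2, ← Multiset.nsmul_singleton]
    have v0 : Wt X Y Z true true true true true true true true true = 0 := by
      simp [Wt, Sp]; ring
    obtain ⟨v1, e1⟩ : ∃ v, v = X * (3 * X / 4 + Y - Z) := ⟨_, rfl⟩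
    obtain ⟨v2, e2⟩ : ∃ v, v = Y * (X + 3 * Y / 4 - Z) := ⟨_, rfl⟩
    obtain ⟨v3, e3⟩ : ∃ v, v = (X + Y) * (3 * X / 4 + 3 * Y / 4 - Z) := ⟨_, rfl⟩
    obtain ⟨v4, e4⟩ : ∃ v, v = 3 / 4 * X * (X + Y * 2 - Z * 2) := ⟨_, rfl⟩
    obtain ⟨v5, e5⟩ : ∃ v, v = 3 / 4 * Y * (X * 2 + Y - Z * 2) := ⟨_, rfl⟩
    obtain ⟨v6, e6⟩ : ∃ v, v = 3 / 4 * (X + Y - Z) ^ 2 - 1 / 4 * (X - Z) * (Y - Z)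
              + 1 / 4 * Z * (X + Y - Z * 2) := ⟨_, rfl⟩
    obtain ⟨v7, e7⟩ : ∃ v, v = 3 / 4 * (X + Y - Z) ^ 2 + 1 / 4 * Z * (X * 2 - 3 * Z) := ⟨_, rfl⟩
    obtain ⟨v8, e8⟩ : ∃ v, v = 3 / 4 * (X + Y - Z) ^ 2 + 1 / 4 * Z * (Y * 2 - 3 * Z) := ⟨_, rfl⟩
    obtain ⟨v9, e9⟩ : ∃ v, v = 3 / 4 * (X + Y) * (X + Y - Z * 2) := ⟨_, rfl⟩
    rw [← e1, ← e2, ← e3, ← e4, ← e5, ← e6, ← e7, ← e8, ← e9, v0]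
    rw [show Wt X Y Z true true true true false false true true true = v2 by rw [e2]; simp [Wt, Sp]; ring]
    rw [show Wt X Y Z true true true false true false true true true = v2 by rw [e2]; simp [Wt, Sp]; ring]
    rw [show Wt X Y Z true true true false false true true true true = v2 by rw [e2]; simp [Wt, Sp]; ring]
    rw [show Wt X Y Z true true true false false false true true true = v5 by rw [e5]; simp [Wt, Sp]; ring]
    rw [show Wt X Y Z true false false true true true true true true = v1 by rw [e1]; simp [Wt, Sp]; ring]
    rw [show Wt X Y Z true false false true false false true true true = v3 by rw [e3]; simp [Wt, Sp]; ring]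
    rw [show Wt X Y Z true false false false true false true true true = v6 by rw [e6]; simp [Wt, Sp]; ring]
    rw [show Wt X Y Z true false false false false true true true true = v6 by rw [e6]; simp [Wt, Sp]; ring]
    rw [show Wt X Y Z true false false false false false true true true = v7 by rw [e7]; simp [Wt, Sp]; ring]
    rw [show Wt X Y Z false true false true true true true true true = v1 by rw [e1]; simp [Wt, Sp]; ring]
    rw [show Wt X Y Z false true false true false false true true true = v6 by rw [e6]; simp [Wt, Sp]; ring]
    rw [show Wt X Y Z false true false false true false true true true = v3 by rw [e3]; simp [Wt, Sp]; ring]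
    rw [show Wt X Y Z false true false false false true true true true = v6 by rw [e6]; simp [Wt, Sp]; ring]
    rw [show Wt X Y Z false true false false false false true true true = v7 by rw [e7]; simp [Wt, Sp]; ring]
    rw [show Wt X Y Z false false true true true true true true true = v1 by rw [e1]; simp [Wt, Sp]; ring]
    rw [show Wt X Y Z false false true true false false true true true = v6 by rw [e6]; simp [Wt, Sp]; ring]
    rw [show Wt X Y Z false false true false true false true true true = v6 by rw [e6]; simp [Wt, Sp]; ring]
    rw [show Wt X Y Z false false true false false true true true true = v3 by rw [e3]; simp [Wt, Sp]; ring]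
    rw [show Wt X Y Z false false true false false false true true true = v7 by rw [e7]; simp [Wt, Sp]; ring]
    rw [show Wt X Y Z false false false true true true true true true = v4 by rw [e4]; simp [Wt, Sp]; ring]
    rw [show Wt X Y Z false false false true false false true true true = v8 by rw [e8]; simp [Wt, Sp]; ring]
    rw [show Wt X Y Z false false false false true false true true true = v8 by rw [e8]; simp [Wt, Sp]; ring]
    rw [show Wt X Y Z false false false false false true true true true = v8 by rw [e8]; simp [Wt, Sp]; ring]
    rw [show Wt X Y Z false false false false false false true true true = v9 by rw [e9]; simp [Wt, Sp]; ring]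
    generalize 3 / 4 * (X + Y - Z) ^ 2 = v10
    module
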